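/- Over the ring ℤ₂ of 2-adic integers the following similarities of ternary quadratic forms hold: (1) X² + 2YZ is similar to the diagonal form ⟨1,1,−1⟩; (2) X² + 2(Y² + YZ + Z²) is similar to the diagonal form ⟨1,1,1⟩; (3) X² + 4YZ is similar to X² + 4(Y² + YZ + Z²). -/

import Mathlib

/-- Two quadratic forms are similar if a unit multiple of one is isometric to the other. -/
def SimilarForm {R : Type*} [CommRing R] {n : ℕ}
    (f g : QuadraticForm R (Fin n → R)) : Prop :=
  ∃ u : Rˣ, ((u : R) • f).Equivalent g

/-!
Work over a ring `R` that is Henselian along an ideal containing `2`; then `3` and `5` are units.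
The first similarity is the identity `(x + y)² + (x - z)² - (x + y - z)² = x² + 2yz`.
For the second, `(1, 1, 1)` has norm `3` in `⟨1, 1, 1⟩` and splits off; its complement is spanned by
`(1, 1, -2)` and `(2, -1, -1)`, on which the form is `3 · 2(Y² + YZ + Z²)`.
For the third, `(1, 1, 0)` has norm `5` in `X² + 4(Y² + YZ + Z²)`, and splitting it off yields
`5(X² + 4(Y² + YZ + cZ²))` with `5c = 2`. By Hensel's lemma, `Y² + YZ + cZ²` is a product of two
linear forms with unit determinant, i.e. a hyperbolic plane.
-/

open Ideal Matrix

section Equivalence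

variable {R : Type*} [CommRing R]

lemma equivalent_of_isUnit_det {ι N : Type*} [Fintype ι] [DecidableEq ι] [AddCommMonoid N]
    [Module R N] {f g : QuadraticMap R (ι → R) N} {A : Matrix ι ι R} (hA : IsUnit A.det)
    (h : ∀ v, g (A *ᵥ v) = f v) : f.Equivalent g := by
  refine ⟨⟨A.toLinearEquiv (Pi.basisFun R ι) hA, fun v ↦ ?_⟩⟩
  change g (A.toLin (Pi.basisFun R ι) (Pi.basisFun R ι) v) = f v
  rw [toLin_eq_toLin', toLin'_apply, h]

lemma SimilarForm.of_isUnit {n : ℕ} {f g : QuadraticForm R (Fin n → R)} {u : R} (hu : IsUnit u)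
    (h : (u • f).Equivalent g) : SimilarForm f g :=
  ⟨hu.unit, h⟩

lemma SimilarForm.of_equivalent_left {n : ℕ} {f f' g : QuadraticForm R (Fin n → R)}
    (hf : f.Equivalent f') (h : SimilarForm f' g) : SimilarForm f g := by
  obtain ⟨e⟩ := hf
  obtain ⟨u, ⟨e'⟩⟩ := h
  exact ⟨u, ⟨e.toLinearEquiv.trans e'.toLinearEquiv, fun v ↦
    (e'.map_app (e v)).trans (congrArg ((u : R) * ·) (e.map_app v))⟩⟩

end Equivalence

section TernaryForms

variable {R : Type*} [CommRing R]

/-- The ternary quadratic form `kX² + aY² + bYZ + cZ²`, the orthogonal sum of a unary and a binary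
form. The matrix is upper triangular so that `b` is the full coefficient of `YZ`. -/
def unaryAddBinary (k a b c : R) : QuadraticForm R (Fin 3 → R) :=
  !![k, 0, 0; 0, a, b; 0, 0, c].toQuadraticForm'

lemma unaryAddBinary_apply (k a b c : R) (v : Fin 3 → R) :
    unaryAddBinary k a b c v = k * v 0 ^ 2 + a * v 1 ^ 2 + b * v 1 * v 2 + c * v 2 ^ 2 := by
  simp only [unaryAddBinary, toQuadraticForm', LinearMap.BilinMap.toQuadraticMap_apply,
    toLinearMap₂'_apply, Fin.sum_univ_three, of_apply, cons_val, smul_eq_mul]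
  ring

lemma unaryAddBinary_equivalent_one_one_neg_one :
    (unaryAddBinary (1 : R) 0 2 0).Equivalent
      (QuadraticMap.weightedSumSquares R ![1, 1, -1]) := by
  refine equivalent_of_isUnit_det (A := !![1, 1, 0; 1, 0, -1; 1, 1, -1]) ?_ fun v ↦ ?_
  · simp [det_fin_three]
  · simp only [unaryAddBinary_apply, QuadraticMap.weightedSumSquares_apply, cons_mulVec,
      empty_mulVec, dotProduct, Fin.sum_univ_three, cons_val, one_zsmul, neg_zsmul]
    ring

lemma three_smul_unaryAddBinary_equivalent_one_one_one (h3 : IsUnit (3 : R)) :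
    ((3 : R) • unaryAddBinary (1 : R) 2 2 2).Equivalent
      (QuadraticMap.weightedSumSquares R ![1, 1, 1]) := by
  let A : Matrix (Fin 3) (Fin 3) R := !![1, 1, 2; 1, 1, -1; 1, -2, -1]
  have det_A : A.det = -3 ^ 2 := by
    simp only [A, det_fin_three, of_apply, cons_val]
    ring
  refine equivalent_of_isUnit_det (A := A) (det_A ▸ (h3.pow 2).neg) fun v ↦ ?_
  simp only [A, unaryAddBinary_apply, QuadraticMap.weightedSumSquares_apply, cons_mulVec,
    empty_mulVec, dotProduct, Fin.sum_univ_three, cons_val, one_nsmul, _root_.smul_apply,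
    smul_eq_mul]
  ring

lemma smul_unaryAddBinary_equivalent {a c d : R} (hu : IsUnit (1 + 4 * a))
    (hc : (1 + 4 * a) * c = 1 + d) :
    ((1 + 4 * a) • unaryAddBinary 1 (4 * a) 4 (4 * c)).Equivalent
      (unaryAddBinary 1 (4 * a) 4 (4 * d)) := by
  -- The first column has norm `1 + 4a`; the other two span its orthogonal complement.
  let A : Matrix (Fin 3) (Fin 3) R := !![1, -(4 * a), -2; 1, 1, 0; 0, 0, 1]
  have det_A : A.det = 1 + 4 * a := by simp [A, det_fin_three]
  refine equivalent_of_isUnit_det (A := A) (det_A ▸ hu) fun v ↦ ?_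
  simp only [A, unaryAddBinary_apply, cons_mulVec, empty_mulVec, dotProduct, Fin.sum_univ_three,
    cons_val, _root_.smul_apply, smul_eq_mul]
  linear_combination -4 * v 2 ^ 2 * hc

lemma unaryAddBinary_equivalent_of_linear_factors {a b c α β γ δ : R}
    (hdet : IsUnit (α * δ - β * γ))
    (h : ∀ y z, (α * y + β * z) * (γ * y + δ * z) = a * y ^ 2 + b * y * z + c * z ^ 2) (k m : R) :
    (unaryAddBinary k (m * a) (m * b) (m * c)).Equivalent (unaryAddBinary k 0 m 0) := by
  let A : Matrix (Fin 3) (Fin 3) R := !![1, 0, 0; 0, α, β; 0, γ, δ]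
  have det_A : A.det = α * δ - β * γ := by simp [A, det_fin_three]
  refine equivalent_of_isUnit_det (A := A) (det_A ▸ hdet) fun v ↦ ?_
  simp only [A, unaryAddBinary_apply, cons_mulVec, empty_mulVec, dotProduct, Fin.sum_univ_three,
    cons_val]
  linear_combination m * h (v 1) (v 2)

end TernaryForms

section Henselian

variable {R : Type*} [CommRing R]

lemma isUnit_add_of_mem_jacobson_bot {u x : R} (hu : IsUnit u)
    (hx : x ∈ jacobson (⊥ : Ideal R)) : IsUnit (u + x) := by
  obtain ⟨u, rfl⟩ := hu
  have h : (u : R) + x = u * (x * ↑u⁻¹ + 1) := by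
    linear_combination -x * u.mul_inv
  exact h ▸ u.isUnit.mul (mem_jacobson_bot.mp hx _)

variable {I : Ideal R} [HenselianRing R I]

lemma isUnit_add_of_mem_of_henselianRing {u x : R} (hu : IsUnit u) (hx : x ∈ I) :
    IsUnit (u + x) :=
  isUnit_add_of_mem_jacobson_bot hu (HenselianRing.jac hx)

open Polynomial in
lemma exists_mem_sq_add_mul_add_eq_zero {b c : R} (hb : IsUnit b) (hc : c ∈ I) :
    ∃ s ∈ I, s ^ 2 + b * s + c = 0 := by
  let p : R[X] := X ^ 2 + C b * X + C c
  have p_monic : p.Monic := by simp only [p]; monicity!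
  obtain ⟨s, hs, hsI⟩ := HenselianRing.is_henselian p p_monic 0 (by simpa [p])
    (by simpa [p] using hb.map (Ideal.Quotient.mk I))
  exact ⟨s, by simpa using hsI, by simpa [p] using hs⟩

lemma exists_linear_factors_of_mul_mem {a b c : R} (hb : IsUnit b) (hac : a * c ∈ I) :
    ∃ α β γ δ : R, IsUnit (α * δ - β * γ) ∧
      ∀ y z, (α * y + β * z) * (γ * y + δ * z) = a * y ^ 2 + b * y * z + c * z ^ 2 := by
  obtain ⟨s, hsI, hs⟩ := exists_mem_sq_add_mul_add_eq_zero hb hac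
  have hbs : IsUnit (b + s) := isUnit_add_of_mem_of_henselianRing hb hsI
  obtain ⟨w, hw⟩ := hbs.exists_right_inv
  have root : c * w * a = -s := by linear_combination w * hs - s * hw
  refine ⟨1, c * w, a, b + s, ?_, fun y z ↦ ?_⟩
  · rw [root, one_mul, sub_neg_eq_add]
    exact isUnit_add_of_mem_of_henselianRing hbs hsI
  · linear_combination y * z * root + c * z ^ 2 * hw

lemma similarForm_hyperbolic_of_mul_mem {a d : R} (hu : IsUnit (1 + 4 * a))
    (had : a * (1 + d) ∈ I) :
    SimilarForm (unaryAddBinary 1 0 4 0) (unaryAddBinary 1 (4 * a) 4 (4 * d)) := by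
  obtain ⟨w, hw⟩ := hu.exists_right_inv
  have hac : a * (w * (1 + d)) ∈ I := mul_left_comm w a (1 + d) ▸ I.mul_mem_left w had
  obtain ⟨α, β, γ, δ, hdet, hfactors⟩ := exists_linear_factors_of_mul_mem isUnit_one hac
  have hyperbolic := unaryAddBinary_equivalent_of_linear_factors hdet hfactors 1 4
  rw [mul_one] at hyperbolic
  refine .of_equivalent_left hyperbolic.symm (.of_isUnit hu ?_)
  exact smul_unaryAddBinary_equivalent hu (by linear_combination (1 + d) * hw)

end Henselian

theorem stmt_13_general {R : Type*} [CommRing R] (I : Ideal R) [HenselianRing R I]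
    (h2 : (2 : R) ∈ I) :
    SimilarForm (toQuadraticForm' (R := R) !![1, 0, 0; 0, 0, 2; 0, 0, 0])
      (QuadraticMap.weightedSumSquares R ![1, 1, -1]) ∧
    SimilarForm (toQuadraticForm' (R := R) !![1, 0, 0; 0, 2, 2; 0, 0, 2])
      (QuadraticMap.weightedSumSquares R ![1, 1, 1]) ∧
    SimilarForm (toQuadraticForm' (R := R) !![1, 0, 0; 0, 0, 4; 0, 0, 0])
      (toQuadraticForm' (R := R) !![1, 0, 0; 0, 4, 4; 0, 0, 4]) := by
  have isUnit_one_add_two_mul (x : R) : IsUnit (1 + 2 * x) :=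
    isUnit_add_of_mem_of_henselianRing isUnit_one (I.mul_mem_right x h2)
  have h3 : IsUnit (3 : R) := by convert isUnit_one_add_two_mul 1 using 1; norm_num
  have h5 : IsUnit (1 + 4 * 1 : R) := by convert isUnit_one_add_two_mul 2 using 1; norm_num
  have hmem : (1 : R) * (1 + 1) ∈ I := by rwa [one_mul, one_add_one_eq_two]
  refine ⟨.of_isUnit isUnit_one ?_, .of_isUnit h3 ?_, ?_⟩
  · rw [one_smul]
    exact unaryAddBinary_equivalent_one_one_neg_one
  · exact three_smul_unaryAddBinary_equivalent_one_one_one h3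
  · have hsimilar := similarForm_hyperbolic_of_mul_mem h5 hmem
    rwa [mul_one] at hsimilar

theorem stmt_13 :
    SimilarForm (Matrix.toQuadraticMap' (R := ℤ_[2]) !![1, 0, 0; 0, 0, 2; 0, 0, 0])
      (QuadraticMap.weightedSumSquares ℤ_[2] ![1, 1, -1]) ∧
    SimilarForm (Matrix.toQuadraticMap' (R := ℤ_[2]) !![1, 0, 0; 0, 2, 2; 0, 0, 2])
      (QuadraticMap.weightedSumSquares ℤ_[2] ![1, 1, 1]) ∧
    SimilarForm (Matrix.toQuadraticMap' (R := ℤ_[2]) !![1, 0, 0; 0, 0, 4; 0, 0, 0])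
      (Matrix.toQuadraticMap' (R := ℤ_[2]) !![1, 0, 0; 0, 4, 4; 0, 0, 4]) :=
  stmt_13_general (IsLocalRing.maximalIdeal ℤ_[2]) PadicInt.p_nonunit
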